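/- Let τ be a soft topology on (X, A) and F, G ∈ S(𝕏). Then: (i) cl(Φ) = Φ and cl(𝕏) = 𝕏; (ii) F ⊆̃ cl(F); (iii) F is soft closed if and only if F = cl(F); (iv) cl(cl(F)) = cl(F); (v) if F ⊆̃ G then cl(F) ⊆̃ cl(G). -/

import Mathlib

/-!
On `S(𝕏)` the elementary operations agree with the pointwise ones: a soft set that is nonempty at
every parameter is recovered from its soft elements, since any value `y ∈ F a` extends to a soft
element by `Function.update` (`SS_SE`). Consequently

* a soft set in `S(𝕏)` is closed exactly when its pointwise complement is an open member of
  `S(𝕏)` (`softClosed_iff`);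
* the closure is the pointwise intersection of the closed sets containing `F`
  (`mem_softClosure_iff`), because that intersection contains `F` and is thus nonempty everywhere
  unless `F` is null, in which case `Φ` itself is closed.

By De Morgan the complement of the closure is the elementary union of the open complements, so the
closure is closed (`softClosed_softClosure`). The listed properties then follow as for any closure
operator.
-/

namespace SoftPaper

variable {X Y A : Type*}

/-- The set of soft elements of a soft set `F`. -/
def SE (F : A → Set X) : Set (A → X) := {x | ∀ a, x a ∈ F a}

/-- The soft set generated by a collection `B` of soft elements. -/
def SS (B : Set (A → X)) : A → Set X := fun a => {y | ∃ x ∈ B, x a = y}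

/-- The null soft set Φ. -/
def Null : A → Set X := fun _ => ∅

/-- The absolute soft set 𝕏. -/
def Abs : A → Set X := fun _ => Set.univ

/-- `F` lies in `S(𝕏)`: it is the null soft set or everywhere nonempty. -/
def MemSX (F : A → Set X) : Prop := F = Null ∨ ∀ a, (F a).Nonempty

/-- Soft subset relation `F ⊆̃ G`. -/
def Subset (F G : A → Set X) : Prop := ∀ a, F a ⊆ G a

/-- Elementary union of a family of soft sets. -/
def eUnion {ι : Type*} (F : ι → A → Set X) : A → Set X := SS (⋃ i, SE (F i))

/-- Elementary intersection of a family of soft sets. -/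
def eInter {ι : Type*} (F : ι → A → Set X) : A → Set X := SS (⋂ i, SE (F i))

/-- Binary elementary union `F ⋓ G`. -/
def eUnion2 (F G : A → Set X) : A → Set X := SS (SE F ∪ SE G)

/-- Binary elementary intersection `F ⋒ G`. -/
def eInter2 (F G : A → Set X) : A → Set X := SS (SE F ∩ SE G)

/-- Elementary complement `F^ℂ`. -/
def eCompl (F : A → Set X) : A → Set X := SS {x : A → X | ∀ a, x a ∉ F a}

/-- A soft topology on `(X, A)`: a collection of soft sets, each in `S(𝕏)`,
containing `Φ` and `𝕏`, closed under elementary unions of arbitrary families of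
members and under binary elementary intersections. -/
structure IsSoftTopology (τ : Set (A → Set X)) : Prop where
  memSX : ∀ F ∈ τ, MemSX F
  null_mem : Null ∈ τ
  abs_mem : Abs ∈ τ
  union_mem : ∀ S ⊆ τ, SS (⋃ F ∈ S, SE F) ∈ τ
  inter_mem : ∀ F ∈ τ, ∀ G ∈ τ, eInter2 F G ∈ τ

/-- `F` is soft closed w.r.t. `τ`. -/
def SoftClosed (τ : Set (A → Set X)) (F : A → Set X) : Prop :=
  MemSX F ∧ MemSX (fun a => (F a)ᶜ) ∧ eCompl F ∈ τ

/-- The soft closure of `F`: the elementary intersection of the family of all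
soft closed sets containing `F`. -/
def softClosure (τ : Set (A → Set X)) (F : A → Set X) : A → Set X :=
  SS (⋂ G ∈ {G : A → Set X | SoftClosed τ G ∧ Subset F G}, SE G)

/-- A value in a fibre of an everywhere nonempty soft set is attained by a soft element. -/
lemma exists_mem_SE {F : A → Set X} (hF : ∀ a, (F a).Nonempty) {a : A} {y : X} (hy : y ∈ F a) :
    ∃ x ∈ SE F, x a = y := by
  classical
  choose f hf using hF
  refine ⟨Function.update f a y, fun b => ?_, by simp⟩
  by_cases h : b = a
  · subst h; simpa using hy
  · simpa [h] using hf b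

lemma MemSX.exists_mem_SE {F : A → Set X} (hF : MemSX F) {a : A} {y : X} (hy : y ∈ F a) :
    ∃ x ∈ SE F, x a = y := by
  rcases hF with rfl | hF
  · exact hy.elim
  · exact SoftPaper.exists_mem_SE hF hy

lemma SS_SE {F : A → Set X} (hF : MemSX F) : SS (SE F) = F := by
  funext a
  ext y
  constructor
  · rintro ⟨x, hx, rfl⟩
    exact hx a
  · exact hF.exists_mem_SE

/-- Closedness expressed through the pointwise complement, which agrees with the elementary one
as soon as it lies in `S(𝕏)`. -/
lemma softClosed_iff {τ : Set (A → Set X)} {F : A → Set X} (hτ : IsSoftTopology τ) :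
    SoftClosed τ F ↔ MemSX F ∧ (fun a => (F a)ᶜ) ∈ τ := by
  have key (h : MemSX fun a => (F a)ᶜ) : eCompl F = fun a => (F a)ᶜ := SS_SE h
  constructor
  · rintro ⟨h1, h2, h3⟩
    exact ⟨h1, key h2 ▸ h3⟩
  · rintro ⟨h1, h2⟩
    have h := hτ.memSX _ h2
    exact ⟨h1, h, (key h).symm ▸ h2⟩

lemma softClosed_null {τ : Set (A → Set X)} (hτ : IsSoftTopology τ) :
    SoftClosed τ (Null : A → Set X) := by
  rw [softClosed_iff hτ]
  refine ⟨Or.inl rfl, ?_⟩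
  have h : (fun a => ((Null : A → Set X) a)ᶜ) = Abs := by
    funext a
    exact Set.compl_empty
  rw [h]
  exact hτ.abs_mem

lemma softClosure_mono (τ : Set (A → Set X)) {F G : A → Set X} (h : Subset F G) :
    Subset (softClosure τ F) (softClosure τ G) := by
  rintro a _ ⟨x, hx, rfl⟩
  refine ⟨x, ?_, rfl⟩
  simp only [Set.mem_iInter] at hx ⊢
  exact fun K hK => hx K ⟨hK.1, fun b => (h b).trans (hK.2 b)⟩

/-- On `S(𝕏)` the soft closure is computed pointwise. -/
lemma mem_softClosure_iff {τ : Set (A → Set X)} (hτ : IsSoftTopology τ) {F : A → Set X}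
    (hF : MemSX F) {a : A} {y : X} :
    y ∈ softClosure τ F a ↔ ∀ G, SoftClosed τ G → Subset F G → y ∈ G a := by
  constructor
  · rintro ⟨x, hx, rfl⟩ G hG hFG
    simp only [Set.mem_iInter] at hx
    exact hx G ⟨hG, hFG⟩ a
  · intro hy
    rcases hF with rfl | hF
    · exact (hy Null (softClosed_null hτ) fun _ => subset_rfl).elim
    · obtain ⟨x, hx, rfl⟩ := exists_mem_SE
        (F := fun b => {z | ∀ G, SoftClosed τ G → Subset F G → z ∈ G b})
        (fun b => (hF b).mono fun z hz G _ hFG => hFG b hz) hy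
      refine ⟨x, ?_, rfl⟩
      simp only [Set.mem_iInter]
      exact fun G hG b => hx b G hG.1 hG.2

lemma subset_softClosure {τ : Set (A → Set X)} (hτ : IsSoftTopology τ) {F : A → Set X}
    (hF : MemSX F) : Subset F (softClosure τ F) := fun a _ hy =>
  (mem_softClosure_iff hτ hF).2 fun _ _ hFG => hFG a hy

lemma SoftClosed.closure_eq {τ : Set (A → Set X)} {F : A → Set X} (h : SoftClosed τ F)
    (hF : MemSX F) (hτ : IsSoftTopology τ) : F = softClosure τ F := by
  funext a
  exact (subset_softClosure hτ hF a).antisymm fun y hy =>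
    (mem_softClosure_iff hτ hF).1 hy F h fun _ => subset_rfl

lemma softClosed_softClosure {τ : Set (A → Set X)} (hτ : IsSoftTopology τ) {F : A → Set X}
    (hF : MemSX F) : SoftClosed τ (softClosure τ F) := by
  rw [softClosed_iff hτ]
  constructor
  · rcases hF with rfl | hF
    · exact Or.inl ((softClosed_null hτ).closure_eq (Or.inl rfl) hτ).symm
    · exact Or.inr fun a => (hF a).mono (subset_softClosure hτ (Or.inr hF) a)
  -- De Morgan: the complement is the elementary union of the complements of the closed
  -- supersets of `F`.
  · let S : Set (A → Set X) :=
      {H | ∃ G, (SoftClosed τ G ∧ Subset F G) ∧ H = fun a => (G a)ᶜ}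
    have hS : S ⊆ τ := by
      rintro _ ⟨G, hG, rfl⟩
      exact ((softClosed_iff hτ).1 hG.1).2
    convert hτ.union_mem S hS using 1
    funext a
    ext y
    rw [Set.mem_compl_iff, mem_softClosure_iff hτ hF]
    constructor
    · intro h
      push Not at h
      obtain ⟨G, hG, hFG, hy⟩ := h
      obtain ⟨x, hx, rfl⟩ := hG.2.1.exists_mem_SE (a := a) (y := y) hy
      exact ⟨x, Set.mem_biUnion (⟨G, ⟨hG, hFG⟩, rfl⟩ : _ ∈ S) hx, rfl⟩
    · rintro ⟨x, hx, rfl⟩ h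
      simp only [Set.mem_iUnion] at hx
      obtain ⟨_, ⟨G, hG, rfl⟩, hx⟩ := hx
      exact hx a (h G hG.1 hG.2)

theorem softClosure_basic [Nonempty X] [Nonempty A]
    (τ : Set (A → Set X)) (hτ : IsSoftTopology τ)
    (F G : A → Set X) (hF : MemSX F) (hG : MemSX G) :
    (softClosure τ Null = (Null : A → Set X) ∧
        softClosure τ Abs = (Abs : A → Set X)) ∧
      Subset F (softClosure τ F) ∧
      (SoftClosed τ F ↔ F = softClosure τ F) ∧
      softClosure τ (softClosure τ F) = softClosure τ F ∧
      (Subset F G → Subset (softClosure τ F) (softClosure τ G)) := by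
  have hN : softClosure τ Null = (Null : A → Set X) :=
    ((softClosed_null hτ).closure_eq (Or.inl rfl) hτ).symm
  have hA : softClosure τ Abs = (Abs : A → Set X) := by
    funext a
    exact Set.eq_univ_of_univ_subset
      (subset_softClosure hτ (Or.inr fun _ => Set.univ_nonempty) a)
  have hcl := softClosed_softClosure hτ hF
  refine ⟨⟨hN, hA⟩, subset_softClosure hτ hF,
    ⟨fun h => ?_, fun h => ?_⟩, ?_, fun h => softClosure_mono τ h⟩
  · exact h.closure_eq hF hτ
  · rw [h]; exact hcl
  · exact (hcl.closure_eq hcl.1 hτ).symm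

end SoftPaper
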